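/- arXiv:2505.12951 — 9 statements merged into one kernel-verified Lean document; each statement's English description precedes it below -/
import Mathlib

section
/- Let Y be a finite nonempty type, p : Y → ℝ a probability mass function, r : Y → ℝ, and β > 0 a real number. Then the equality ∑_y p y · r y = β · log (∑_y p y · exp (r y / β)) holds if and only if r is constant on the support of p, i.e., there exists c : ℝ such that r y = c for every y with p y > 0. -/
theorem stmt_0 {Y : Type*} [Fintype Y] [Nonempty Y]
    (p : Y → ℝ) (hp : ∀ y, 0 ≤ p y) (hps : ∑ y, p y = 1)
    (r : Y → ℝ) (β : ℝ) (hβ : 0 < β) :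
    (∑ y, p y * r y) = β * Real.log (∑ y, p y * Real.exp (r y / β)) ↔
      ∃ c : ℝ, ∀ y, 0 < p y → r y = c := by
  have jensen := strictConcaveOn_log_Ioi.map_sum_eq_iff_of_nonneg (t := Finset.univ) (w := p)
    (p := fun y => Real.exp (r y / β)) (fun y _ => hp y) hps (fun y _ => Real.exp_pos _)
  simp only [smul_eq_mul, Real.log_exp, Finset.mem_univ, true_imp_iff, Real.exp_eq_exp,
    div_left_inj' hβ.ne', ← mul_div_assoc, ← Finset.sum_div, eq_div_iff hβ.ne'] at jensen
  rw [eq_comm, mul_comm, jensen]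
  constructor
  · intro h
    obtain ⟨y₀, -, hy₀⟩ := Finset.exists_ne_zero_of_sum_ne_zero (hps.trans_ne one_ne_zero)
    exact ⟨r y₀, fun y hy => h hy.ne' hy₀⟩
  · rintro ⟨c, hc⟩ j hj k hk
    rw [hc j ((hp j).lt_of_ne' hj), hc k ((hp k).lt_of_ne' hk)]
end

section
/- Let Y be a finite nonempty type, p : Y → ℝ a probability mass function, and r : Y → ℝ. Then β · log (∑_y p y · exp (r y / β)) tends to ∑_y p y · r y as β → ∞; equivalently, (∑_y p y · exp (r y / β))^β tends to exp (∑_y p y · r y) as β → ∞. -/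
open Filter

/-- The derivative at `0` of the cumulant generating function of `r` under `p` is the mean. -/
lemma hasDerivAt_log_sum_mul_exp_zero {Y : Type*} [Fintype Y]
    (p : Y → ℝ) (hps : ∑ y, p y = 1) (r : Y → ℝ) :
    HasDerivAt (fun t : ℝ => Real.log (∑ y, p y * Real.exp (r y * t))) (∑ y, p y * r y) 0 := by
  have hsum : HasDerivAt (fun t : ℝ => ∑ y, p y * Real.exp (r y * t)) (∑ y, p y * r y) 0 := by
    refine HasDerivAt.fun_sum fun y _ => ?_
    simpa using (((hasDerivAt_id (0 : ℝ)).const_mul (r y)).exp).const_mul (p y)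
  simpa [hps] using hsum.log (by simp [hps])

lemma sum_mul_exp_pos {Y : Type*} [Fintype Y]
    (p : Y → ℝ) (hp : ∀ y, 0 ≤ p y) (hps : ∑ y, p y = 1) (f : Y → ℝ) :
    0 < ∑ y, p y * Real.exp (f y) := by
  obtain ⟨y, hy, hpy⟩ : ∃ y ∈ Finset.univ, 0 < p y :=
    Finset.exists_lt_of_sum_lt (by simp [hps])
  exact Finset.sum_pos' (fun z _ => mul_nonneg (hp z) (Real.exp_pos _).le)
    ⟨y, hy, mul_pos hpy (Real.exp_pos _)⟩

theorem stmt_1 {Y : Type*} [Fintype Y] [Nonempty Y]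
    (p : Y → ℝ) (hp : ∀ y, 0 ≤ p y) (hps : ∑ y, p y = 1)
    (r : Y → ℝ) :
    Tendsto (fun β : ℝ => β * Real.log (∑ y, p y * Real.exp (r y / β)))
      atTop (nhds (∑ y, p y * r y)) ∧
    Tendsto (fun β : ℝ => (∑ y, p y * Real.exp (r y / β)) ^ β)
      atTop (nhds (Real.exp (∑ y, p y * r y))) := by
  have hlog : Tendsto (fun β : ℝ => β * Real.log (∑ y, p y * Real.exp (r y / β)))
      atTop (nhds (∑ y, p y * r y)) := by
    have hslope := (hasDerivAt_log_sum_mul_exp_zero p hps r).tendsto_slope_zero_right.comp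
      tendsto_inv_atTop_nhdsGT_zero
    simpa [Function.comp_def, hps, div_eq_mul_inv] using hslope
  refine ⟨hlog, ((Real.continuous_exp.tendsto _).comp hlog).congr fun β => ?_⟩
  rw [Function.comp_apply, Real.rpow_def_of_pos (sum_mul_exp_pos p hp hps _), mul_comm]
end

section
/- Let Y be a finite nonempty type, p : Y → ℝ a probability mass function, and r : Y → ℝ. Let m be the maximum of r over the support of p. Then β · log (∑_y p y · exp (r y / β)) tends to m as β → 0 from the right; consequently, the gap V(β) − r̄ = β · log (∑_y p y · exp (r y / β)) − ∑_y p y · r y tends to m − r̄ as β → 0⁺. -/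
open Filter

/-- The soft value is at most any upper bound of the reward on the support. -/
lemma softValue_le {Y : Type*} [Fintype Y] {p r : Y → ℝ} {m β : ℝ}
    (hp : ∀ y, 0 ≤ p y) (hps : ∑ y, p y = 1) (hm : ∀ y, 0 < p y → r y ≤ m) (hβ : 0 < β)
    (hpos : 0 < ∑ y, p y * Real.exp (r y / β)) :
    β * Real.log (∑ y, p y * Real.exp (r y / β)) ≤ m := by
  have hsum : ∑ y, p y * Real.exp (r y / β) ≤ Real.exp (m / β) := by
    calc ∑ y, p y * Real.exp (r y / β) ≤ ∑ y, p y * Real.exp (m / β) := by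
          refine Finset.sum_le_sum fun y _ => ?_
          rcases (hp y).eq_or_lt with h | h
          · simp [← h]
          · have := hm y h
            gcongr
      _ = Real.exp (m / β) := by rw [← Finset.sum_mul, hps, one_mul]
  have hlog := (Real.log_le_iff_le_exp hpos).2 hsum
  calc β * Real.log (∑ y, p y * Real.exp (r y / β)) ≤ β * (m / β) := by gcongr
    _ = m := by field_simp

/-- A single outcome of positive mass bounds the soft value from below. -/
lemma add_mul_log_le_softValue {Y : Type*} [Fintype Y] {p r : Y → ℝ} {β : ℝ} {y : Y}
    (hp : ∀ y, 0 ≤ p y) (hy : 0 < p y) (hβ : 0 < β) :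
    r y + β * Real.log (p y) ≤ β * Real.log (∑ y, p y * Real.exp (r y / β)) := by
  have hle : p y * Real.exp (r y / β) ≤ ∑ y, p y * Real.exp (r y / β) :=
    Finset.single_le_sum (f := fun y => p y * Real.exp (r y / β))
      (fun z _ => mul_nonneg (hp z) (Real.exp_pos _).le) (Finset.mem_univ y)
  calc r y + β * Real.log (p y) = β * Real.log (p y * Real.exp (r y / β)) := by
        rw [Real.log_mul hy.ne' (Real.exp_pos _).ne', Real.log_exp]
        field_simp
        ring
    _ ≤ β * Real.log (∑ y, p y * Real.exp (r y / β)) := by gcongr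

theorem stmt_2 {Y : Type*} [Fintype Y] [Nonempty Y]
    (p : Y → ℝ) (hp : ∀ y, 0 ≤ p y) (hps : ∑ y, p y = 1)
    (r : Y → ℝ) (m : ℝ)
    (hm_ub : ∀ y, 0 < p y → r y ≤ m)
    (hm_mem : ∃ y, 0 < p y ∧ r y = m) :
    Tendsto (fun β : ℝ => β * Real.log (∑ y, p y * Real.exp (r y / β)))
      (nhdsWithin 0 (Set.Ioi 0)) (nhds m) ∧
    Tendsto (fun β : ℝ =>
        β * Real.log (∑ y, p y * Real.exp (r y / β)) - ∑ y, p y * r y)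
      (nhdsWithin 0 (Set.Ioi 0)) (nhds (m - ∑ y, p y * r y)) := by
  obtain ⟨y, hy, rfl⟩ := hm_mem
  have hpos (β : ℝ) : 0 < ∑ y, p y * Real.exp (r y / β) :=
    Finset.sum_pos' (fun z _ => mul_nonneg (hp z) (Real.exp_pos _).le)
      ⟨y, Finset.mem_univ y, mul_pos hy (Real.exp_pos _)⟩
  have hlower : Tendsto (fun β : ℝ => r y + β * Real.log (p y))
      (nhdsWithin 0 (Set.Ioi 0)) (nhds (r y)) := by
    have hcont : Continuous fun β : ℝ => r y + β * Real.log (p y) := by fun_prop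
    simpa using (hcont.tendsto 0).mono_left nhdsWithin_le_nhds
  have hlim : Tendsto (fun β : ℝ => β * Real.log (∑ y, p y * Real.exp (r y / β)))
      (nhdsWithin 0 (Set.Ioi 0)) (nhds (r y)) := by
    refine tendsto_of_tendsto_of_tendsto_of_le_of_le' hlower tendsto_const_nhds ?_ ?_
    · filter_upwards [self_mem_nhdsWithin] with β hβ
      exact add_mul_log_le_softValue hp hy hβ
    · filter_upwards [self_mem_nhdsWithin] with β hβ
      exact softValue_le hp hps hm_ub hβ (hpos β)
  exact ⟨hlim, hlim.sub_const _⟩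
end

section
/- Let Y be a finite nonempty type, p : Y → ℝ a probability mass function, r : Y → ℝ, and β > 0. Let m be the maximum of r over the support of p and let p* = ∑_{y : r y = m} p y. Then 0 ≤ β · log (∑_y p y · exp (r y / β)) − ∑_y p y · r y ≤ (m − r̄) + β · (log p* + (1 − p*)/p*), where r̄ = ∑_y p y · r y. -/
/-- Jensen's inequality for the soft value: the mean reward is at most the soft value. -/
theorem sum_mul_le_mul_log_sum_mul_exp {Y : Type*} [Fintype Y] {p : Y → ℝ} (hp : ∀ y, 0 ≤ p y)
    (hps : ∑ y, p y = 1) (r : Y → ℝ) {β : ℝ} (hβ : 0 < β) :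
    ∑ y, p y * r y ≤ β * Real.log (∑ y, p y * Real.exp (r y / β)) := by
  have jensen : Real.exp (∑ y, p y * (r y / β)) ≤ ∑ y, p y * Real.exp (r y / β) := by
    simpa using convexOn_exp.map_sum_le (t := Finset.univ) (w := p) (p := fun y => r y / β)
      (fun y _ => hp y) hps (fun y _ => Set.mem_univ _)
  have hlog := (Real.le_log_iff_exp_le ((Real.exp_pos _).trans_le jensen)).2 jensen
  calc ∑ y, p y * r y = β * ∑ y, p y * (r y / β) := by
        rw [Finset.mul_sum]
        exact Finset.sum_congr rfl fun y _ => by field_simp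
    _ ≤ _ := by gcongr

/-- The soft value is at most any upper bound of the reward on the support. -/
theorem mul_log_sum_mul_exp_le {Y : Type*} [Fintype Y] {p : Y → ℝ} (hp : ∀ y, 0 ≤ p y)
    (hps : ∑ y, p y = 1) {r : Y → ℝ} {β : ℝ} (hβ : 0 < β) {m : ℝ}
    (hm : ∀ y, 0 < p y → r y ≤ m) :
    β * Real.log (∑ y, p y * Real.exp (r y / β)) ≤ m := by
  have hle : ∑ y, p y * Real.exp (r y / β) ≤ Real.exp (m / β) := by
    calc ∑ y, p y * Real.exp (r y / β) ≤ ∑ y, p y * Real.exp (m / β) := by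
          refine Finset.sum_le_sum fun y _ => ?_
          rcases (hp y).eq_or_lt with h | h
          · simp [← h]
          · have := hm y h
            gcongr
      _ = Real.exp (m / β) := by rw [← Finset.sum_mul, hps, one_mul]
  have hpos : 0 < ∑ y, p y * Real.exp (r y / β) := by
    obtain ⟨y, -, hy⟩ := Finset.exists_ne_zero_of_sum_ne_zero (hps.trans_ne one_ne_zero)
    exact Finset.sum_pos' (fun y _ => mul_nonneg (hp y) (Real.exp_pos _).le)
      ⟨y, Finset.mem_univ y, mul_pos ((hp y).lt_of_ne' hy) (Real.exp_pos _)⟩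
  have hlog := (Real.log_le_iff_le_exp hpos).2 hle
  calc β * Real.log (∑ y, p y * Real.exp (r y / β)) ≤ β * (m / β) := by gcongr
    _ = m := mul_div_cancel₀ m hβ.ne'

theorem log_add_one_sub_div_self_nonneg {q : ℝ} (hq : 0 < q) :
    0 ≤ Real.log q + (1 - q) / q := by
  have := Real.one_sub_inv_le_log_of_pos hq
  rw [sub_div, div_self hq.ne', one_div]
  linarith

theorem stmt_4 {Y : Type*} [Fintype Y] [Nonempty Y]
    (p : Y → ℝ) (hp : ∀ y, 0 ≤ p y) (hps : ∑ y, p y = 1)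
    (r : Y → ℝ) (β : ℝ) (hβ : 0 < β) (m : ℝ)
    (hm_ub : ∀ y, 0 < p y → r y ≤ m)
    (hm_mem : ∃ y, 0 < p y ∧ r y = m) :
    0 ≤ β * Real.log (∑ y, p y * Real.exp (r y / β)) - ∑ y, p y * r y ∧
    β * Real.log (∑ y, p y * Real.exp (r y / β)) - ∑ y, p y * r y ≤
      (m - ∑ y, p y * r y) +
        β * (Real.log (∑ y ∈ Finset.univ.filter (fun y => r y = m), p y) +
          (1 - ∑ y ∈ Finset.univ.filter (fun y => r y = m), p y) /
            (∑ y ∈ Finset.univ.filter (fun y => r y = m), p y)) := by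
  have hq : 0 < ∑ y ∈ Finset.univ.filter (fun y => r y = m), p y := by
    obtain ⟨y, hy, hym⟩ := hm_mem
    exact Finset.sum_pos' (fun y _ => hp y) ⟨y, by simp [hym], hy⟩
  have hlower := sum_mul_le_mul_log_sum_mul_exp hp hps r hβ
  have hupper := mul_log_sum_mul_exp_le hp hps hβ hm_ub
  have herror := mul_nonneg hβ.le (log_add_one_sub_div_self_nonneg hq)
  exact ⟨by linarith, by linarith⟩
end

section
/- Let Y be a finite nonempty type, p : Y → ℝ a probability mass function, r : Y → ℝ, and β > 0. Let m be the maximum of r over the support of p and p* = ∑_{y : r y = m} p y. Then m + β · log p* ≤ β · log (∑_y p y · exp (r y / β)) ≤ m. -/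
theorem stmt_6 {Y : Type*} [Fintype Y] [Nonempty Y]
    (p : Y → ℝ) (hp : ∀ y, 0 ≤ p y) (hps : ∑ y, p y = 1)
    (r : Y → ℝ) (β : ℝ) (hβ : 0 < β) (m : ℝ)
    (hm_ub : ∀ y, 0 < p y → r y ≤ m)
    (hm_mem : ∃ y, 0 < p y ∧ r y = m) :
    m + β * Real.log (∑ y ∈ Finset.univ.filter (fun y => r y = m), p y) ≤
        β * Real.log (∑ y, p y * Real.exp (r y / β)) ∧
    β * Real.log (∑ y, p y * Real.exp (r y / β)) ≤ m := by
  have hpstar : 0 < ∑ y ∈ Finset.univ.filter (fun y => r y = m), p y := by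
    obtain ⟨y, hy, hym⟩ := hm_mem
    exact Finset.sum_pos' (fun z _ => hp z) ⟨y, by simp [hym], hy⟩
  have hlower : (∑ y ∈ Finset.univ.filter (fun y => r y = m), p y) * Real.exp (m / β) ≤
      ∑ y, p y * Real.exp (r y / β) := by
    rw [Finset.sum_mul]
    calc ∑ y ∈ Finset.univ.filter (fun y => r y = m), p y * Real.exp (m / β)
        = ∑ y ∈ Finset.univ.filter (fun y => r y = m), p y * Real.exp (r y / β) :=
          Finset.sum_congr rfl fun y hy => by rw [(Finset.mem_filter.mp hy).2]
      _ ≤ ∑ y, p y * Real.exp (r y / β) :=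
          Finset.sum_le_sum_of_subset_of_nonneg (Finset.filter_subset _ _)
            fun y _ _ => mul_nonneg (hp y) (Real.exp_pos _).le
  have hupper : ∑ y, p y * Real.exp (r y / β) ≤ Real.exp (m / β) := by
    calc ∑ y, p y * Real.exp (r y / β) ≤ ∑ y, p y * Real.exp (m / β) := by
          refine Finset.sum_le_sum fun y _ => ?_
          rcases (hp y).eq_or_lt with h | h
          · simp [← h]
          · have hry := hm_ub y h
            gcongr
      _ = Real.exp (m / β) := by rw [← Finset.sum_mul, hps, one_mul]
  have hprod := mul_pos hpstar (Real.exp_pos (m / β))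
  have hcancel : β * (m / β) = m := mul_div_cancel₀ m hβ.ne'
  constructor
  · have hlog := mul_le_mul_of_nonneg_left (Real.log_le_log hprod hlower) hβ.le
    rw [Real.log_mul hpstar.ne' (Real.exp_pos _).ne', Real.log_exp, mul_add, hcancel] at hlog
    linarith
  · have hlog := mul_le_mul_of_nonneg_left
      (Real.log_le_log (hprod.trans_le hlower) hupper) hβ.le
    rwa [Real.log_exp, hcancel] at hlog
end

section
/- Let Y be a finite nonempty type, p : Y → ℝ a probability mass function, and r : Y → ℝ. Then β · (β · log (∑_y p y · exp (r y / β)) − ∑_y p y · r y) tends to Var/2 as β → ∞, where Var = ∑_y p y · (r y − r̄)² and r̄ = ∑_y p y · r y. -/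
open Filter

open scoped Topology

/-- Second-order expansion at `0` of a function whose derivative is differentiable at `0`. -/
lemma tendsto_sub_mul_deriv_div_sq {f f' : ℝ → ℝ} {c : ℝ} (hf : ∀ t, HasDerivAt f (f' t) t)
    (hf' : HasDerivAt f' c 0) (h0 : f 0 = 0) :
    Tendsto (fun t => (f t - t * f' 0) / t ^ 2) (𝓝[>] 0) (𝓝 (c / 2)) := by
  have hnum (t : ℝ) : HasDerivAt (fun t => f t - t * f' 0) (f' t - f' 0) t := by
    simpa using (hf t).fun_sub ((hasDerivAt_id t).mul_const (f' 0))
  have hden (t : ℝ) : HasDerivAt (fun t : ℝ => t ^ 2) (2 * t) t := by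
    simpa using hasDerivAt_pow 2 t
  refine HasDerivAt.lhopital_zero_nhdsGT (Eventually.of_forall hnum) (Eventually.of_forall hden)
    ?_ ?_ ?_ ?_
  · filter_upwards [self_mem_nhdsWithin] with t ht
    exact mul_ne_zero two_ne_zero (ne_of_gt ht)
  · have h := (hnum 0).continuousAt.tendsto
    simp only [h0, zero_mul, sub_zero] at h
    exact h.mono_left nhdsWithin_le_nhds
  · have h := (hden 0).continuousAt.tendsto
    simp only [ne_eq, OfNat.ofNat_ne_zero, not_false_eq_true, zero_pow] at h
    exact h.mono_left nhdsWithin_le_nhds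
  · have h := ((hasDerivAt_iff_tendsto_slope.1 hf').mono_left
      (nhdsWithin_mono 0 fun t ht => ne_of_gt ht)).div_const 2
    refine h.congr fun t => ?_
    rw [slope_def_field, sub_zero, div_div, mul_comm t 2]

lemma hasDerivAt_sum_mul_exp {Y : Type*} [Fintype Y] (w r : Y → ℝ) (t : ℝ) :
    HasDerivAt (fun t => ∑ y, w y * Real.exp (r y * t)) (∑ y, w y * r y * Real.exp (r y * t)) t := by
  refine HasDerivAt.fun_sum fun y _ => ?_
  have h := ((hasDerivAt_const_mul (x := t) (r y)).exp).const_mul (w y)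
  rwa [mul_comm (Real.exp _), ← mul_assoc] at h

theorem stmt_10 {Y : Type*} [Fintype Y] [Nonempty Y]
    (p : Y → ℝ) (hp : ∀ y, 0 ≤ p y) (hps : ∑ y, p y = 1)
    (r : Y → ℝ) :
    Tendsto (fun β : ℝ =>
        β * (β * Real.log (∑ y, p y * Real.exp (r y / β)) - ∑ y, p y * r y))
      atTop (nhds ((∑ y, p y * (r y - ∑ z, p z * r z) ^ 2) / 2)) := by
  have hpos (t : ℝ) : 0 < ∑ y, p y * Real.exp (r y * t) := by
    obtain ⟨y, hy, hpy⟩ := Finset.exists_ne_zero_of_sum_ne_zero (hps.trans_ne one_ne_zero)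
    exact Finset.sum_pos' (fun z _ => mul_nonneg (hp z) (Real.exp_pos _).le)
      ⟨y, hy, mul_pos ((hp y).lt_of_ne' hpy) (Real.exp_pos _)⟩
  have hmgf := hasDerivAt_sum_mul_exp p r
  have hlog (t : ℝ) := (hmgf t).log (hpos t).ne'
  have hlog' := (hasDerivAt_sum_mul_exp (fun y => p y * r y) r 0).fun_div (hmgf 0) (hpos 0).ne'
  have hlim := (tendsto_sub_mul_deriv_div_sq hlog hlog' (by simp [hps])).comp
    tendsto_inv_atTop_nhdsGT_zero
  simp only [mul_zero, Real.exp_zero, mul_one, hps, one_pow, div_one] at hlim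
  have hvar : ∑ y, p y * (r y - ∑ z, p z * r z) ^ 2
      = ∑ y, p y * r y * r y - (∑ y, p y * r y) * ∑ y, p y * r y := by
    set m := ∑ z, p z * r z with hm
    calc ∑ y, p y * (r y - m) ^ 2
        = ∑ y, (p y * r y * r y - 2 * m * (p y * r y) + m ^ 2 * p y) :=
          Finset.sum_congr rfl fun y _ => by ring
      _ = ∑ y, p y * r y * r y - m * m := by
          rw [Finset.sum_add_distrib, Finset.sum_sub_distrib, ← Finset.mul_sum, ← Finset.mul_sum,
            hps, ← hm]
          ring
  rw [hvar]
  refine hlim.congr' ?_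
  filter_upwards [eventually_gt_atTop 0] with β hβ
  simp only [Function.comp_apply, ← div_eq_mul_inv]
  field_simp
end

section
/- Let Y be a finite nonempty type, p : Y → ℝ a probability mass function, r : Y → ℝ with |r y| ≤ r_max for all y (r_max ≥ 0), and let E be a real normed vector space and g : Y → E satisfy ‖g y‖ ≤ G for all y (G ≥ 0). Then for every c > 0, ‖∑_y p y • ((r y − r̄) • g y)‖ ≤ G · c + 2 · r_max · G · (Var / c²), where r̄ = ∑_y p y · r y and Var = ∑_y p y · (r y − r̄)². -/
/-- Pointwise form of the Chebyshev splitting: a quantity bounded by `M` is at most `c`, up to an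
error `M * (d ^ 2 / c ^ 2)` which dominates it as soon as `c < |d|`. -/
lemma abs_le_add_mul_sq_div_sq {d M c : ℝ} (hd : |d| ≤ M) (hc : 0 < c) :
    |d| ≤ c + M * (d ^ 2 / c ^ 2) := by
  have hM : 0 ≤ M := (abs_nonneg d).trans hd
  rcases le_total |d| c with h | h
  · have : 0 ≤ M * (d ^ 2 / c ^ 2) := by positivity
    linarith
  · have h1 : 1 ≤ d ^ 2 / c ^ 2 := by
      rw [one_le_div (by positivity), ← sq_abs d]
      gcongr
    have := le_mul_of_one_le_right hM h1
    linarith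

/-- A weighted average of reals bounded by `M` in absolute value is bounded by `M`. -/
lemma abs_sum_mul_le_of_sum_eq_one {Y : Type*} [Fintype Y] {p r : Y → ℝ} {M : ℝ}
    (hp : ∀ y, 0 ≤ p y) (hps : ∑ y, p y = 1) (hr : ∀ y, |r y| ≤ M) :
    |∑ y, p y * r y| ≤ M :=
  calc |∑ y, p y * r y| ≤ ∑ y, |p y * r y| := Finset.abs_sum_le_sum_abs _ _
    _ ≤ ∑ y, p y * M := by
      refine Finset.sum_le_sum fun y _ => ?_
      rw [abs_mul, abs_of_nonneg (hp y)]
      exact mul_le_mul_of_nonneg_left (hr y) (hp y)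
    _ = M := by rw [← Finset.sum_mul, hps, one_mul]

theorem stmt_12 {Y : Type*} [Fintype Y] [Nonempty Y]
    (p : Y → ℝ) (hp : ∀ y, 0 ≤ p y) (hps : ∑ y, p y = 1)
    (r : Y → ℝ) (r_max : ℝ) (hr_max : 0 ≤ r_max) (hr : ∀ y, |r y| ≤ r_max)
    {E : Type*} [NormedAddCommGroup E] [NormedSpace ℝ E]
    (g : Y → E) (G : ℝ) (hG : 0 ≤ G) (hg : ∀ y, ‖g y‖ ≤ G)
    (c : ℝ) (hc : 0 < c) :
    ‖∑ y, p y • (((r y - ∑ z, p z * r z)) • g y)‖ ≤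
      G * c + 2 * r_max * G * ((∑ y, p y * (r y - ∑ z, p z * r z) ^ 2) / c ^ 2) := by
  have hmean := abs_sum_mul_le_of_sum_eq_one hp hps hr
  set m := ∑ z, p z * r z
  have hdev : ∀ y, |r y - m| ≤ 2 * r_max := fun y => by
    linarith [abs_sub (r y) m, hr y]
  calc ‖∑ y, p y • ((r y - m) • g y)‖
      ≤ ∑ y, p y * ((c + 2 * r_max * ((r y - m) ^ 2 / c ^ 2)) * G) := by
        refine norm_sum_le_of_le _ fun y _ => ?_
        rw [norm_smul, norm_smul, Real.norm_of_nonneg (hp y), Real.norm_eq_abs]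
        exact mul_le_mul_of_nonneg_left
          (mul_le_mul (abs_le_add_mul_sq_div_sq (hdev y) hc) (hg y) (norm_nonneg _)
            (by positivity)) (hp y)
    _ = ∑ y, (p y * (G * c) + 2 * r_max * G * (p y * (r y - m) ^ 2 / c ^ 2)) :=
        Finset.sum_congr rfl fun y _ => by ring
    _ = G * c + 2 * r_max * G * ((∑ y, p y * (r y - m) ^ 2) / c ^ 2) := by
        rw [Finset.sum_add_distrib, ← Finset.sum_mul, hps, one_mul, ← Finset.mul_sum,
          ← Finset.sum_div]
end

section
/- Let Y be a finite nonempty type, p : Y → ℝ a probability mass function, r : Y → ℝ with |r y| ≤ r_max for all y (r_max ≥ 0), N a natural number, γ ≥ 0 and β₁ ≥ 0 real numbers, E a real normed vector space, and g : Y → E with ‖g y‖ ≤ 2 · N · γ for all y. Then ‖∑_y p y • ((β₁ · (r y − r̄)) • g y)‖ ≤ (4 · r_max + 2) · N · β₁ · γ · Var^{1/3}, where r̄ = ∑_y p y · r y, Var = ∑_y p y · (r y − r̄)², and Var^{1/3} denotes the real cube root (real power 1/3) of the nonnegative number Var. -/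
/-- For finite weights of total mass one, the squared weighted mean of `|d|` is at most the weighted
mean of `d ^ 2`. -/
lemma sq_sum_mul_abs_le_sum_mul_sq {Y : Type*} [Fintype Y] (p : Y → ℝ) (hp : ∀ y, 0 ≤ p y)
    (hps : ∑ y, p y = 1) (d : Y → ℝ) :
    (∑ y, p y * |d y|) ^ 2 ≤ ∑ y, p y * d y ^ 2 := by
  simpa only [smul_eq_mul, sq_abs] using (convexOn_pow 2).map_sum_le
    (t := Finset.univ) (w := p) (p := fun y => |d y|) (fun y _ => hp y) hps
    (fun y _ => Set.mem_Ici.2 (abs_nonneg (d y)))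

/-- If `|r| ≤ R`, deviations of `r` from its weighted mean are at most `2 * R`. -/
lemma abs_sub_sum_mul_le {Y : Type*} [Fintype Y] (p : Y → ℝ) (hp : ∀ y, 0 ≤ p y)
    (hps : ∑ y, p y = 1) (r : Y → ℝ) (R : ℝ) (hr : ∀ y, |r y| ≤ R) (y : Y) :
    |r y - ∑ z, p z * r z| ≤ 2 * R := by
  have hmean : |∑ z, p z * r z| ≤ R := calc
    |∑ z, p z * r z| ≤ ∑ z, |p z * r z| := Finset.abs_sum_le_sum_abs _ _
    _ ≤ ∑ z, p z * R := Finset.sum_le_sum fun z _ => by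
      rw [abs_mul, abs_of_nonneg (hp z)]
      exact mul_le_mul_of_nonneg_left (hr z) (hp z)
    _ = R := by rw [← Finset.sum_mul, hps, one_mul]
  linarith [abs_sub (r y) (∑ z, p z * r z), hr y]

lemma le_mul_rpow_one_third {m V c : ℝ} (hV : 0 ≤ V) (hc : 1 ≤ c) (hm : m ^ 2 ≤ V)
    (hVc : V ≤ c ^ 2) : m ≤ c * V ^ ((1 : ℝ) / 3) := by
  set t := V ^ ((1 : ℝ) / 3)
  have ht : 0 ≤ t := Real.rpow_nonneg hV _
  have htV : t ^ 3 = V := by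
    rw [← Real.rpow_natCast, ← Real.rpow_mul hV]
    norm_num
  have hc2 : 1 ≤ c ^ 2 := one_le_pow₀ hc
  have htc : t ≤ c ^ 2 := by
    by_contra! h
    have : t < t ^ 3 := lt_self_pow₀ (hc2.trans_lt h) (by norm_num)
    linarith
  refine le_of_abs_le (abs_le_of_sq_le_sq ?_ (by positivity))
  calc
    m ^ 2 ≤ t * t ^ 2 := by linarith [pow_succ' t 2]
    _ ≤ c ^ 2 * t ^ 2 := by gcongr
    _ = (c * t) ^ 2 := by ring

theorem stmt_13 {Y : Type*} [Fintype Y] [Nonempty Y]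
    (p : Y → ℝ) (hp : ∀ y, 0 ≤ p y) (hps : ∑ y, p y = 1)
    (r : Y → ℝ) (r_max : ℝ) (hr_max : 0 ≤ r_max) (hr : ∀ y, |r y| ≤ r_max)
    (N : ℕ) (γ β₁ : ℝ) (hγ : 0 ≤ γ) (hβ₁ : 0 ≤ β₁)
    {E : Type*} [NormedAddCommGroup E] [NormedSpace ℝ E]
    (g : Y → E) (hg : ∀ y, ‖g y‖ ≤ 2 * N * γ) :
    ‖∑ y, p y • ((β₁ * (r y - ∑ z, p z * r z)) • g y)‖ ≤
      (4 * r_max + 2) * N * β₁ * γ *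
        (∑ y, p y * (r y - ∑ z, p z * r z) ^ 2) ^ ((1 : ℝ) / 3) := by
  set d : Y → ℝ := fun y => r y - ∑ z, p z * r z
  have hdev : ∀ y, |d y| ≤ 2 * r_max := abs_sub_sum_mul_le p hp hps r r_max hr
  have hvar : ∑ y, p y * d y ^ 2 ≤ (2 * r_max + 1) ^ 2 := calc
    ∑ y, p y * d y ^ 2 ≤ ∑ y, p y * (2 * r_max + 1) ^ 2 := Finset.sum_le_sum fun y _ =>
      mul_le_mul_of_nonneg_left
        (sq_le_sq' (by linarith [abs_le.1 (hdev y)]) (by linarith [abs_le.1 (hdev y)])) (hp y)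
    _ = (2 * r_max + 1) ^ 2 := by rw [← Finset.sum_mul, hps, one_mul]
  have hmad : ∑ y, p y * |d y| ≤
      (2 * r_max + 1) * (∑ y, p y * d y ^ 2) ^ ((1 : ℝ) / 3) :=
    le_mul_rpow_one_third (Finset.sum_nonneg fun y _ => mul_nonneg (hp y) (sq_nonneg _))
      (by linarith) (sq_sum_mul_abs_le_sum_mul_sq p hp hps d) hvar
  calc
    ‖∑ y, p y • ((β₁ * d y) • g y)‖ ≤ ∑ y, p y * (β₁ * |d y| * (2 * N * γ)) :=
      norm_sum_le_of_le _ fun y _ => by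
        rw [norm_smul, norm_smul, Real.norm_of_nonneg (hp y), Real.norm_eq_abs, abs_mul,
          abs_of_nonneg hβ₁]
        have := hp y
        gcongr
        exact hg y
    _ = (2 * N * β₁ * γ) * ∑ y, p y * |d y| := by
      rw [Finset.mul_sum]
      exact Finset.sum_congr rfl fun y _ => by ring
    _ ≤ (2 * N * β₁ * γ) * ((2 * r_max + 1) * (∑ y, p y * d y ^ 2) ^ ((1 : ℝ) / 3)) := by
      gcongr
    _ = (4 * r_max + 2) * N * β₁ * γ * (∑ y, p y * d y ^ 2) ^ ((1 : ℝ) / 3) := by ring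
end

section
/- Let Y be a finite nonempty type, q : Y → ℝ a probability mass function with q y > 0 for all y, π : Y → ℝ with π y > 0 for all y, r : Y → ℝ, and β₁ > 0, β₂ > 0 real numbers. Let r̄ = ∑_y q y · r y. Then (β₁²/(4β₂)) · ∑_y q y · (r y − r̄ − (2β₂/β₁) · log (π y / q y))² + ∑_y q y · (β₁ · (r y − r̄) · log (π y) − β₂ · (log (π y / q y))²) = (β₁²/(4β₂)) · ∑_y q y · (r y − r̄)² + β₁ · ∑_y q y · (r y − r̄) · log (q y). -/
theorem stmt_16 {Y : Type*} [Fintype Y] [Nonempty Y]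
    (q : Y → ℝ) (hq : ∀ y, 0 < q y) (hqs : ∑ y, q y = 1)
    (π : Y → ℝ) (hπ : ∀ y, 0 < π y)
    (r : Y → ℝ) (β₁ β₂ : ℝ) (hβ₁ : 0 < β₁) (hβ₂ : 0 < β₂) :
    (β₁ ^ 2 / (4 * β₂)) *
        ∑ y, q y * (r y - (∑ z, q z * r z) -
          (2 * β₂ / β₁) * Real.log (π y / q y)) ^ 2 +
      ∑ y, q y * (β₁ * (r y - ∑ z, q z * r z) * Real.log (π y) -
        β₂ * (Real.log (π y / q y)) ^ 2) =
    (β₁ ^ 2 / (4 * β₂)) * ∑ y, q y * (r y - ∑ z, q z * r z) ^ 2 +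
      β₁ * ∑ y, q y * (r y - ∑ z, q z * r z) * Real.log (q y) := by
  generalize ∑ z, q z * r z = m
  simp only [Finset.mul_sum, ← Finset.sum_add_distrib]
  refine Finset.sum_congr rfl fun y _ => ?_
  rw [Real.log_div (hπ y).ne' (hq y).ne']
  field_simp
  ring
end
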